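/- For every τ ∈ ℍ and every z ∈ ℂ ∖ Λ_τ, ℘₁(z+τ;τ) = ℘₁(z;τ) + G₂(τ)·τ − 2πi. -/

import Mathlib

open Complex Real

/-- The lattice point `kτ + l` associated to `p = (k, l) ∈ ℤ²`. -/
noncomputable def latticePt (τ : ℂ) (p : ℤ × ℤ) : ℂ := (p.1 : ℂ) * τ + (p.2 : ℂ)

/-- The Weierstrass function `℘₁(z;τ)`. -/
noncomputable def wp1 (z τ : ℂ) : ℂ :=
  1 / z + ∑' p : {p : ℤ × ℤ // p ≠ (0, 0)},
    (1 / (z - latticePt τ p.1) + 1 / latticePt τ p.1 + z / (latticePt τ p.1) ^ 2)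

/-- The Weierstrass function `℘₂(z;τ)`. -/
noncomputable def wp2 (z τ : ℂ) : ℂ :=
  1 / z ^ 2 + ∑' p : {p : ℤ × ℤ // p ≠ (0, 0)},
    (1 / (z - latticePt τ p.1) ^ 2 - 1 / (latticePt τ p.1) ^ 2)

/-- The Weierstrass function `℘_m(z;τ)` for `m ≥ 3`. -/
noncomputable def wpHigh (m : ℕ) (z τ : ℂ) : ℂ :=
  ∑' p : ℤ × ℤ, 1 / (z - latticePt τ p) ^ m

/-- The Weierstrass function `℘_m(z;τ)`, `m ≥ 1`. -/
noncomputable def wp (m : ℕ) (z τ : ℂ) : ℂ :=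
  if m = 1 then wp1 z τ else if m = 2 then wp2 z τ else wpHigh m z τ

/-- The Eisenstein series `G_k(τ) = Σ_{(m,l) ≠ (0,0)} (mτ+l)^{-k}` (used for `k ≥ 3`). -/
noncomputable def Eis (k : ℕ) (τ : ℂ) : ℂ :=
  ∑' p : {p : ℤ × ℤ // p ≠ (0, 0)}, 1 / (latticePt τ p.1) ^ k

/-- The quasimodular Eisenstein series
`G₂(τ) = π²/3 + Σ_{m≠0} Σ_{l∈ℤ} (mτ+l)^{-2}` (iterated sum). -/
noncomputable def G2 (τ : ℂ) : ℂ :=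
  (Real.pi : ℂ) ^ 2 / 3 +
    ∑' m : {m : ℤ // m ≠ 0}, ∑' l : ℤ, 1 / (((m : ℤ) : ℂ) * τ + (l : ℂ)) ^ 2

/-!
Both sides of the identity are compared row by row, a row being the set of lattice points `kτ + l`
with `k` fixed. By Euler's partial fraction expansion of the cotangent, the `k`-th row of
`℘₁(w;τ) - ℘₁(z;τ)` sums to
`π cot(π(w - kτ)) - π cot(π(z - kτ)) + (w - z) ∑ₗ (kτ + l)⁻²`.
For `w = z + 1` the cotangents cancel, so the row sums of `G₂` are summable. For `w = z + τ` the
cotangents telescope over `k`, and `cot → ∓i` as `im → ±∞` leaves the boundary term `-2πi`.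
-/

open Filter Topology SummationFilter

section InfiniteSums

variable {β α : Type*} [AddCommGroup α] [TopologicalSpace α] [IsTopologicalAddGroup α] [T2Space α]

lemma tsum_eq_add_tsum_subtype_ne {f : β → α} (hf : Summable f) (b : β) :
    ∑' x, f x = f b + ∑' x : {x // x ≠ b}, f x := by
  classical
  have hite : ∑' x : {x // x ≠ b}, f x = ∑' x, if x = b then 0 else f x :=
    (tsum_subtype {x | x ≠ b} f).trans <| tsum_congr fun x ↦ by by_cases hx : x = b <;> simp [hx]
  rw [hite, hf.tsum_eq_add_tsum_ite b]

lemma eq_sub_of_hasSum_int_telescope {f : ℤ → α} {s a b : α}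
    (hf : HasSum (fun n ↦ f n - f (n + 1)) s) (ha : Tendsto f atBot (𝓝 a))
    (hb : Tendsto f atTop (𝓝 b)) : s = a - b := by
  have hs := hasSum_symmetricIco_int_iff.1 (hf.mono_left (symmetricIco ℤ).le_atTop)
  simp only [Finset.sum_Ico_int_sub] at hs
  have hN : Tendsto (fun N : ℕ ↦ (N : ℤ)) atTop atTop := tendsto_natCast_atTop_atTop
  exact tendsto_nhds_unique hs
    ((ha.comp (tendsto_neg_atTop_atBot.comp hN)).sub (hb.comp hN))

end InfiniteSums

lemma pow_mul_pow_le_pow_add_pow {a b : ℝ} (ha : 0 ≤ a) (hb : 0 ≤ b) (m n : ℕ) :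
    a ^ m * b ^ n ≤ a ^ (m + n) + b ^ (m + n) := by
  rcases le_total a b with hab | hba
  · calc a ^ m * b ^ n ≤ b ^ m * b ^ n := by gcongr
      _ = b ^ (m + n) := (pow_add b m n).symm
      _ ≤ a ^ (m + n) + b ^ (m + n) := le_add_of_nonneg_left (by positivity)
  · calc a ^ m * b ^ n ≤ a ^ m * a ^ n := by gcongr
      _ = a ^ (m + n) := (pow_add a m n).symm
      _ ≤ a ^ (m + n) + b ^ (m + n) := le_add_of_nonneg_right (by positivity)

section Cotangent

lemma cot_add_pi (x : ℂ) : Complex.cot (x + π) = Complex.cot x := by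
  simp [Complex.cot, Complex.cos_add_pi, Complex.sin_add_pi]

lemma tendsto_cot_comap_im_atTop : Tendsto Complex.cot (comap im atTop) (𝓝 (-I)) := by
  have hexp : Tendsto (fun x ↦ cexp (2 * I * x)) (comap im atTop) (𝓝 0) := by
    rw [tendsto_exp_nhds_zero_iff]
    simpa using tendsto_comap.const_mul_atTop_of_neg (r := (-2 : ℝ)) (by norm_num)
  have h := (hexp.add_const 1).div ((hexp.const_sub 1).const_mul I) (by simp)
  simp only [zero_add, sub_zero, mul_one, one_div, inv_I] at h
  exact h.congr fun x ↦ (Complex.cot_eq_exp_ratio x).symm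

lemma tendsto_cot_comap_im_atBot : Tendsto Complex.cot (comap im atBot) (𝓝 I) := by
  have hneg : Tendsto (fun x : ℂ ↦ -x) (comap im atBot) (comap im atTop) :=
    tendsto_comap_iff.2 (tendsto_neg_atBot_atTop.comp tendsto_comap)
  have h := (tendsto_cot_comap_im_atTop.comp hneg).neg
  rw [neg_neg] at h
  refine h.congr fun x ↦ ?_
  simp [Complex.cot, div_neg]

variable {x y : ℂ}

lemma hasSum_symmetricIcc_one_div_sub_intCast (hx : x ∈ integerComplement) :
    HasSum (fun l : ℤ ↦ 1 / (x - l)) (π * Complex.cot (π * x)) (symmetricIcc ℤ) := by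
  rw [hasSum_symmetricIcc_iff]
  have h := (tendsto_logDeriv_euler_cot_sub hx).const_add (1 / x)
  rw [add_sub_cancel] at h
  refine h.congr fun N ↦ ?_
  induction N with
  | zero => simp
  | succ N ih =>
    rw [Nat.cast_add, Nat.cast_one, Finset.Icc_succ_succ, Finset.sum_union (by simp),
      Finset.sum_pair (by lia), ← ih, Finset.sum_range_succ]
    simp only [cotTerm]
    push_cast
    ring

lemma summable_one_div_sub_intCast_sub (hx : x ∈ integerComplement) (hy : y ∈ integerComplement) :
    Summable fun l : ℤ ↦ 1 / (x - l) - 1 / (y - l) := by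
  have hO (u : ℂ) : (fun l : ℤ ↦ (u - l)⁻¹) =O[cofinite] fun l ↦ (l : ℝ)⁻¹ := by
    refine (EisensteinSeries.linear_inv_isBigO_right (-1) u).neg_left.congr_left fun l ↦ ?_
    rw [← inv_neg]
    push_cast
    ring
  have hprod : Summable fun l : ℤ ↦ ((x - l) * (y - l))⁻¹ := by
    apply EisensteinSeries.summable_inv_of_isBigO_rpow_inv (a := 2) one_lt_two
    simpa [pow_two, mul_comm] using (hO x).mul (hO y)
  refine (hprod.mul_left (y - x)).congr fun l ↦ ?_
  have hxl : x - l ≠ 0 := sub_ne_zero.2 fun h ↦ hx ⟨l, h.symm⟩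
  have hyl : y - l ≠ 0 := sub_ne_zero.2 fun h ↦ hy ⟨l, h.symm⟩
  field_simp
  ring

lemma hasSum_one_div_sub_intCast_sub (hx : x ∈ integerComplement) (hy : y ∈ integerComplement) :
    HasSum (fun l : ℤ ↦ 1 / (x - l) - 1 / (y - l))
      (π * Complex.cot (π * x) - π * Complex.cot (π * y)) := by
  have hs := (summable_one_div_sub_intCast_sub hx hy).hasSum
  have hcot := (hasSum_symmetricIcc_one_div_sub_intCast hx).sub
    (hasSum_symmetricIcc_one_div_sub_intCast hy)
  rwa [HasSum.unique (hs.mono_left (symmetricIcc ℤ).le_atTop) hcot] at hs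

end Cotangent

section Lattice

variable {τ z : ℂ}

lemma latticePt_eq_ofReal_iff (hτ : τ.im ≠ 0) {p : ℤ × ℤ} {x : ℝ} :
    latticePt τ p = x ↔ p.1 = 0 ∧ (p.2 : ℝ) = x := by
  simp only [latticePt, Complex.ext_iff, add_re, add_im, mul_re, mul_im, intCast_re, intCast_im,
    ofReal_re, ofReal_im, zero_mul, sub_zero, add_zero, mul_eq_zero, Int.cast_eq_zero, hτ, or_false]
  constructor
  · rintro ⟨hre, him⟩
    simpa [him] using hre
  · rintro ⟨hk, hl⟩
    simp [hk, hl]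

lemma latticePt_ne_zero (hτ : τ.im ≠ 0) {p : ℤ × ℤ} (hp : p ≠ (0, 0)) : latticePt τ p ≠ 0 := by
  rw [← ofReal_zero, Ne, latticePt_eq_ofReal_iff hτ, Int.cast_eq_zero]
  exact fun h ↦ hp (Prod.ext h.1 h.2)

lemma one_half_ne_latticePt (hτ : τ.im ≠ 0) (p : ℤ × ℤ) : (1 / 2 : ℂ) ≠ latticePt τ p := by
  intro h
  have hhalf : latticePt τ p = ((1 / 2 : ℝ) : ℂ) := by rw [← h]; norm_num
  have hl := ((latticePt_eq_ofReal_iff hτ).1 hhalf).2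
  have : 2 * p.2 = 1 := by exact_mod_cast (by linarith : 2 * (p.2 : ℝ) = 1)
  lia

lemma add_latticePt_ne_latticePt (hz : ∀ p, z ≠ latticePt τ p) (q p : ℤ × ℤ) :
    z + latticePt τ q ≠ latticePt τ p := fun h ↦ hz (p - q) <| by
  rw [eq_sub_of_add_eq h]
  simp only [latticePt, Prod.fst_sub, Prod.snd_sub, Int.cast_sub]
  ring

lemma sub_intCast_mul_mem_integerComplement (hz : ∀ p, z ≠ latticePt τ p) (k : ℤ) :
    z - k * τ ∈ integerComplement := by
  rintro ⟨l, hl⟩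
  exact hz (k, l) (by simp [latticePt, hl])

lemma summable_norm_inv_latticePt_sub_pow (hτ : τ.im ≠ 0) (x : ℂ) {r : ℕ} (hr : 2 < r) :
    Summable fun p : ℤ × ℤ ↦ ‖(latticePt τ p - x)⁻¹‖ ^ r := by
  have hind : LinearIndependent ℝ ![τ, 1] := by
    rw [LinearIndependent.pair_iff]
    intro s t h
    have him : s = 0 := by simpa [hτ] using congrArg im h
    exact ⟨him, by simpa [him] using congrArg re h⟩
  let L : PeriodPair := ⟨τ, 1, hind⟩
  have h := (L.hasSum_sumInvPow x hr).summable.norm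
  rw [← L.latticeEquivProd.symm.toEquiv.summable_iff] at h
  refine h.congr fun p ↦ ?_
  simp [L.latticeEquiv_symm_apply p, latticePt, L]

end Lattice

section WeierstrassZeta

/-- The general term of the series `℘₁`, extended to all of `ℤ²`: since division by zero gives zero,
its value at `(0, 0)` is the leading term `1 / z`. -/
noncomputable def wp1Term (z τ : ℂ) (p : ℤ × ℤ) : ℂ :=
  1 / (z - latticePt τ p) + 1 / latticePt τ p + z / latticePt τ p ^ 2

variable {τ z w : ℂ}

lemma wp1Term_eq_neg_sq_mul (hz : ∀ p, z ≠ latticePt τ p) {p : ℤ × ℤ} (hp : latticePt τ p ≠ 0) :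
    wp1Term z τ p = -(z ^ 2 * ((latticePt τ p)⁻¹ ^ 2 * (latticePt τ p - z)⁻¹)) := by
  have hd : latticePt τ p - z ≠ 0 := sub_ne_zero.2 (hz p).symm
  rw [wp1Term, ← neg_sub (latticePt τ p) z]
  field_simp
  ring

lemma summable_wp1Term (hτ : τ.im ≠ 0) (hz : ∀ p, z ≠ latticePt τ p) :
    Summable (wp1Term z τ) := by
  have h0 := summable_norm_inv_latticePt_sub_pow hτ 0 (r := 3) (by norm_num)
  have h1 := summable_norm_inv_latticePt_sub_pow hτ z (r := 3) (by norm_num)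
  refine Summable.of_norm_bounded_eventually ((h0.add h1).mul_left (‖z‖ ^ 2)) ?_
  filter_upwards [(Set.finite_singleton ((0, 0) : ℤ × ℤ)).compl_mem_cofinite] with p hp
  rw [wp1Term_eq_neg_sq_mul hz (latticePt_ne_zero hτ hp), norm_neg, norm_mul, norm_mul, norm_pow,
    norm_pow, sub_zero]
  gcongr
  simpa using pow_mul_pow_le_pow_add_pow (norm_nonneg (latticePt τ p)⁻¹)
    (norm_nonneg (latticePt τ p - z)⁻¹) 2 1

lemma hasSum_wp1 (hτ : τ.im ≠ 0) (hz : ∀ p, z ≠ latticePt τ p) :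
    HasSum (wp1Term z τ) (wp1 z τ) := by
  have hs := summable_wp1Term hτ hz
  convert hs.hasSum using 1
  rw [tsum_eq_add_tsum_subtype_ne hs (0, 0)]
  simp [wp1, wp1Term, latticePt]

lemma hasSum_row_wp1Term_sub (hw : ∀ p, w ≠ latticePt τ p) (hz : ∀ p, z ≠ latticePt τ p) (k : ℤ) :
    HasSum (fun l : ℤ ↦ wp1Term w τ (k, l) - wp1Term z τ (k, l))
      (π * Complex.cot (π * (w - k * τ)) - π * Complex.cot (π * (z - k * τ)) +
        (w - z) * ∑' l : ℤ, 1 / (k * τ + l) ^ 2) := by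
  have hG : Summable fun l : ℤ ↦ 1 / (k * τ + l) ^ 2 := by
    simpa using EisensteinSeries.linear_right_summable τ k le_rfl
  convert! (hasSum_one_div_sub_intCast_sub (sub_intCast_mul_mem_integerComplement hw k)
    (sub_intCast_mul_mem_integerComplement hz k)).add (hG.hasSum.mul_left (w - z)) using 2 with l
  simp only [wp1Term, latticePt, sub_sub]
  ring

lemma hasSum_rows_wp1_sub (hτ : τ.im ≠ 0) (hw : ∀ p, w ≠ latticePt τ p)
    (hz : ∀ p, z ≠ latticePt τ p) :
    HasSum (fun k : ℤ ↦ π * Complex.cot (π * (w - k * τ)) - π * Complex.cot (π * (z - k * τ)) +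
      (w - z) * ∑' l : ℤ, 1 / (k * τ + l) ^ 2) (wp1 w τ - wp1 z τ) :=
  ((hasSum_wp1 hτ hw).sub (hasSum_wp1 hτ hz)).prod_fiberwise (hasSum_row_wp1Term_sub hw hz)

end WeierstrassZeta

section EisensteinSeries

variable {τ : ℂ}

lemma summable_tsum_one_div_sq (hτ : τ.im ≠ 0) :
    Summable fun k : ℤ ↦ ∑' l : ℤ, 1 / (k * τ + l) ^ 2 := by
  have hz := one_half_ne_latticePt hτ
  have hw (p : ℤ × ℤ) : (1 / 2 + 1 : ℂ) ≠ latticePt τ p := by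
    simpa [latticePt] using add_latticePt_ne_latticePt hz (0, 1) p
  refine (hasSum_rows_wp1_sub hτ hw hz).summable.congr fun k ↦ ?_
  have harg : π * ((1 / 2 + 1 : ℂ) - k * τ) = π * (1 / 2 - k * τ) + π := by ring
  rw [harg, cot_add_pi]
  ring

lemma tsum_int_one_div_sq : ∑' l : ℤ, 1 / (l : ℂ) ^ 2 = (π : ℂ) ^ 2 / 3 := by
  have h := two_mul_riemannZeta_eq_tsum_int_inv_pow_of_even le_rfl even_two
  rw [Nat.cast_ofNat, riemannZeta_two] at h
  simp only [one_div, ← h]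
  ring

lemma hasSum_G2 (hτ : τ.im ≠ 0) :
    HasSum (fun k : ℤ ↦ ∑' l : ℤ, 1 / (k * τ + l) ^ 2) (G2 τ) := by
  have hs := summable_tsum_one_div_sq hτ
  convert hs.hasSum using 1
  rw [tsum_eq_add_tsum_subtype_ne hs 0, G2, ← tsum_int_one_div_sq]
  simp only [Int.cast_zero, zero_mul, zero_add]

end EisensteinSeries

section Telescoping

variable {τ : ℂ}

lemma tendsto_cot_sub_intCast_mul_atTop (hτ : 0 < τ.im) (z : ℂ) :
    Tendsto (fun k : ℤ ↦ Complex.cot (π * (z - k * τ))) atTop (𝓝 I) := by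
  refine tendsto_cot_comap_im_atBot.comp (tendsto_comap_iff.2 ?_)
  have hk : Tendsto (fun k : ℤ ↦ k * τ.im) atTop atTop :=
    tendsto_intCast_atTop_atTop.atTop_mul_const hτ
  simpa [Function.comp_def, sub_eq_add_neg] using
    (tendsto_atBot_add_const_left _ z.im (tendsto_neg_atTop_atBot.comp hk)).const_mul_atBot pi_pos

lemma tendsto_cot_sub_intCast_mul_atBot (hτ : 0 < τ.im) (z : ℂ) :
    Tendsto (fun k : ℤ ↦ Complex.cot (π * (z - k * τ))) atBot (𝓝 (-I)) := by
  refine tendsto_cot_comap_im_atTop.comp (tendsto_comap_iff.2 ?_)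
  have hk : Tendsto (fun k : ℤ ↦ k * τ.im) atBot atBot :=
    (tendsto_intCast_atBot_iff.2 tendsto_id).atBot_mul_const hτ
  simpa [Function.comp_def, sub_eq_add_neg] using
    (tendsto_atTop_add_const_left _ z.im (tendsto_neg_atBot_atTop.comp hk)).const_mul_atTop pi_pos

lemma eq_neg_two_pi_I_of_hasSum_cot_sub_cot {z s : ℂ} (hτ : 0 < τ.im)
    (hs : HasSum (fun k : ℤ ↦ π * Complex.cot (π * (z + τ - k * τ)) -
      π * Complex.cot (π * (z - k * τ))) s) : s = -(2 * π * I) := by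
  have hshift (k : ℤ) : z - k * τ = z + τ - (k + 1 : ℤ) * τ := by
    push_cast
    ring
  simp only [hshift] at hs
  rw [eq_sub_of_hasSum_int_telescope (f := fun k ↦ π * Complex.cot (π * (z + τ - k * τ))) hs
    ((tendsto_cot_sub_intCast_mul_atBot hτ _).const_mul _)
    ((tendsto_cot_sub_intCast_mul_atTop hτ _).const_mul _)]
  ring

end Telescoping

/-- Quasi-periodicity of `℘₁` in the direction `τ`:
`℘₁(z+τ;τ) = ℘₁(z;τ) + G₂(τ)·τ − 2πi`. -/
theorem wp1_quasiperiodic_tau (τ z : ℂ) (hτ : 0 < τ.im)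
    (hz : ∀ p : ℤ × ℤ, z ≠ latticePt τ p) :
    wp1 (z + τ) τ = wp1 z τ + G2 τ * τ - 2 * Real.pi * Complex.I := by
  have hw (p : ℤ × ℤ) : z + τ ≠ latticePt τ p := by
    simpa [latticePt] using add_latticePt_ne_latticePt hz (1, 0) p
  have hrows := hasSum_rows_wp1_sub hτ.ne' hw hz
  simp only [add_sub_cancel_left] at hrows
  have hcot := hrows.sub ((hasSum_G2 hτ.ne').mul_left τ)
  simp only [add_sub_cancel_right] at hcot
  linear_combination eq_neg_two_pi_I_of_hasSum_cot_sub_cot hτ hcot
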